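/- The smallest complete cap in PG(6,2) has size 21: there exists a complete cap of 21 nonzero vectors in (ZMod 2)^7, and there is no complete cap in (ZMod 2)^7 of cardinality at most 20. -/

import Mathlib

/-- Points of PG(n-1,2) are the nonzero vectors of `Fin n → ZMod 2`.
A set `S` of nonzero vectors is 1-saturating if every nonzero vector `x ∉ S`
is the sum of two distinct elements of `S`. -/
def Saturating {n : ℕ} (S : Set (Fin n → ZMod 2)) : Prop :=
  (∀ s ∈ S, s ≠ 0) ∧
    ∀ x : Fin n → ZMod 2, x ≠ 0 → x ∉ S →
      ∃ a ∈ S, ∃ b ∈ S, a ≠ b ∧ x = a + b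

/-- A minimal 1-saturating set: 1-saturating, and removing any point destroys saturation. -/
def MinSat {n : ℕ} (S : Set (Fin n → ZMod 2)) : Prop :=
  Saturating S ∧ ∀ s ∈ S, ¬ Saturating (S \ {s})

/-- A cap: a set of nonzero vectors no three pairwise distinct elements of which sum to zero. -/
def IsCap {n : ℕ} (S : Set (Fin n → ZMod 2)) : Prop :=
  (∀ s ∈ S, s ≠ 0) ∧
    ∀ a ∈ S, ∀ b ∈ S, ∀ c ∈ S, a ≠ b → a ≠ c → b ≠ c → a + b + c ≠ 0

/-- A complete cap: a cap that is 1-saturating. -/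
def CompleteCap {n : ℕ} (S : Set (Fin n → ZMod 2)) : Prop :=
  IsCap S ∧ Saturating S

/-- Projective equivalence: some element of GL(n, ZMod 2) maps `S` onto `T`. -/
def ProjEquiv {n : ℕ} (S T : Set (Fin n → ZMod 2)) : Prop :=
  ∃ g : Matrix.GeneralLinearGroup (Fin n) (ZMod 2),
    (fun x => Matrix.mulVec (g : Matrix (Fin n) (Fin n) (ZMod 2)) x) '' S = T

/-!
For a cap `S` in `(ZMod 2)^7`, the character sums over `S` have known first, second and third
moments, and linear programming on these shows that, when `#S ≤ 20`, some hyperplane `W` contains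
at most six points of `S`. Let `A = S ∩ W` and let `B` be a translate into `W` of `S \ W`. Then
`A` is sum-free, and `B` is independent and dominating in the Cayley graph of `W` with connection
set `A`; furthermore, every nonzero point of `W` which is neither in `A` nor a sum of two points of
`A` is a sum of two points of `B`. In a basis of `W` that starts with elements of `A`, only finitely
many `A` remain. When `A` spans a proper subspace of `W`, one of its cosets meets `B` in a small
independent dominating set. A branch and bound search shows that these conditions force
`#A + #B > 20`.
-/

open Finset Module

section Characters

variable {ι : Type*} [Fintype ι]

/-- The nontrivial additive character of `ZMod 2`. -/
def signChar : AddChar (ZMod 2) ℤ := AddChar.zmodChar 2 (neg_one_sq (R := ℤ))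

theorem signChar_eq_ite (z : ZMod 2) : signChar z = if z = 0 then 1 else -1 := by
  decide +revert

/-- The character sum `∑ s ∈ S, (-1) ^ (u ⬝ s)`, that is, the Fourier transform of the indicator
function of `S`. -/
def charSum (S : Finset (ι → ZMod 2)) (u : ι → ZMod 2) : ℤ := ∑ s ∈ S, signChar (u ⬝ᵥ s)

theorem charSum_zero (S : Finset (ι → ZMod 2)) : charSum S 0 = #S := by
  simp [charSum]

theorem charSum_eq_two_mul_card_sub (S : Finset (ι → ZMod 2)) (u : ι → ZMod 2) :
    charSum S u = 2 * #{s ∈ S | u ⬝ᵥ s = 0} - #S := by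
  have h := card_filter_add_card_filter_not (s := S) (u ⬝ᵥ · = 0)
  simp only [charSum, signChar_eq_ite, sum_ite, sum_const, nsmul_eq_mul, mul_one, mul_neg]
  omega

variable [DecidableEq ι]

theorem sum_signChar_dotProduct (x : ι → ZMod 2) :
    ∑ u : ι → ZMod 2, signChar (u ⬝ᵥ x) = if x = 0 then 2 ^ Fintype.card ι else 0 := by
  let ψ : AddChar (ι → ZMod 2) ℤ :=
    signChar.compAddMonoidHom (AddMonoidHom.mk' (· ⬝ᵥ x) fun u v => add_dotProduct u v x)
  have hψ : ψ = 0 ↔ x = 0 := by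
    refine ⟨fun h => funext fun i => ?_, fun h => ?_⟩
    · have hi : signChar (x i) = 1 := by
        simpa [ψ] using DFunLike.congr_fun h (Pi.single i 1)
      simpa [signChar_eq_ite] using hi
    · ext u
      simp [ψ, h]
  rw [show ∑ u, signChar (u ⬝ᵥ x) = ∑ u, ψ u from rfl, AddChar.sum_eq_ite]
  simp [hψ]

theorem sum_charSum_pow (S : Finset (ι → ZMod 2)) (k : ℕ) :
    ∑ u, charSum S u ^ k =
      2 ^ Fintype.card ι * #{p ∈ Fintype.piFinset fun _ : Fin k => S | ∑ i, p i = 0} := by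
  have hprod (u : ι → ZMod 2) (p : Fin k → ι → ZMod 2) :
      ∏ i, signChar (u ⬝ᵥ p i) = signChar (u ⬝ᵥ ∑ i, p i) := by
    rw [dotProduct_sum]
    exact (map_prod signChar.toMonoidHom (fun i => Multiplicative.ofAdd (u ⬝ᵥ p i)) univ).symm
  simp only [charSum, sum_pow', hprod]
  rw [sum_comm]
  simp only [sum_signChar_dotProduct, ← sum_filter, sum_const, nsmul_eq_mul, mul_comm]

end Characters

section CapMoments

variable {n : ℕ}

theorem add_eq_zero_iff_eq_of_zmod_two {V : Type*} [AddCommGroup V] [Module (ZMod 2) V]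
    {x y : V} : x + y = 0 ↔ x = y := by
  rw [add_eq_zero_iff_eq_neg, ZModModule.neg_eq_self]

theorem IsCap.add_notMem {S : Set (Fin n → ZMod 2)} (hS : IsCap S) {a b : Fin n → ZMod 2}
    (ha : a ∈ S) (hb : b ∈ S) : a + b ∉ S := by
  intro hab
  by_cases h : a = b
  · subst h
    exact hS.1 _ hab (ZModModule.add_self a)
  · refine hS.2 a ha b hb _ hab h ?_ ?_ (ZModModule.add_self _)
    · simpa using (hS.1 b hb)
    · simpa using (hS.1 a ha)

variable {S : Finset (Fin n → ZMod 2)}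

theorem sum_charSum_of_isCap (hS : IsCap (S : Set (Fin n → ZMod 2))) :
    ∑ u, charSum S u = 0 := by
  have hempty : {p ∈ Fintype.piFinset fun _ : Fin 1 => S | ∑ i, p i = 0} = ∅ := by
    refine filter_eq_empty_iff.2 fun p hp => ?_
    simpa using hS.1 (p 0) (Fintype.mem_piFinset.1 hp 0)
  have h := sum_charSum_pow S 1
  rw [hempty] at h
  simpa using h

theorem sum_charSum_sq (S : Finset (Fin n → ZMod 2)) :
    ∑ u, charSum S u ^ 2 = 2 ^ n * #S := by
  have hdiag : {p ∈ Fintype.piFinset fun _ : Fin 2 => S | ∑ i, p i = 0} =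
      S.image fun s _ => s := by
    ext p
    simp only [mem_filter, Fintype.mem_piFinset, Fin.forall_fin_two, Fin.sum_univ_two, mem_image,
      add_eq_zero_iff_eq_of_zmod_two]
    constructor
    · rintro ⟨⟨h₀, -⟩, h⟩
      exact ⟨p 0, h₀, funext <| Fin.forall_fin_two.2 ⟨rfl, h⟩⟩
    · rintro ⟨s, hs, rfl⟩
      exact ⟨⟨hs, hs⟩, rfl⟩
  have hinj : Function.Injective fun (s : Fin n → ZMod 2) (_ : Fin 2) => s :=
    fun s t h => congr_fun h 0
  rw [sum_charSum_pow S 2, hdiag, card_image_of_injective _ hinj, Fintype.card_fin]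

theorem sum_charSum_cube_of_isCap (hS : IsCap (S : Set (Fin n → ZMod 2))) :
    ∑ u, charSum S u ^ 3 = 0 := by
  have hempty : {p ∈ Fintype.piFinset fun _ : Fin 3 => S | ∑ i, p i = 0} = ∅ := by
    refine filter_eq_empty_iff.2 fun p hp hsum => ?_
    rw [Fin.sum_univ_three, add_eq_zero_iff_eq_of_zmod_two] at hsum
    have hmem := Fintype.mem_piFinset.1 hp
    exact hS.add_notMem (hmem 0) (hmem 1) (hsum ▸ hmem 2)
  rw [sum_charSum_pow S 3, hempty, card_empty, Nat.cast_zero, mul_zero]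

end CapMoments

section SmallHyperplaneSection

theorem sub_mul_sub_one_nonneg (a j : ℤ) : 0 ≤ (a - j) * (a - j - 1) := by
  rcases le_or_gt a j with h | h
  · exact mul_nonneg_of_nonpos_of_nonpos (by omega) (by omega)
  · exact mul_nonneg (by omega) (by omega)

variable {n : ℕ} {S : Finset (Fin n → ZMod 2)}

theorem sum_erase_zero_cubic (hS : IsCap (S : Set (Fin n → ZMod 2))) (a b c : ℤ) :
    ∑ u ∈ univ.erase 0, (charSum S u + a) * (charSum S u + b) * (charSum S u + c) =
      (a + b + c) * 2 ^ n * #S + a * b * c * 2 ^ n - (#S + a) * (#S + b) * (#S + c) := by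
  have hexpand (y : ℤ) : (y + a) * (y + b) * (y + c) =
      y ^ 3 + (a + b + c) * y ^ 2 + (a * b + a * c + b * c) * y + a * b * c := by ring
  rw [sum_erase_eq_sub (mem_univ 0), charSum_zero]
  simp only [hexpand, sum_add_distrib, ← mul_sum, sum_charSum_of_isCap hS, sum_charSum_sq,
    sum_charSum_cube_of_isCap hS, sum_const, card_univ, Fintype.card_pi_const, ZMod.card,
    nsmul_eq_mul]
  push_cast
  ring

/-- Linear programming: the cubic `(x - m) * (x - j) * (x - j - 1)` is nonnegative at all integers
`x ≥ m`, so at all `#(S ∩ u^⊥)` with `u ≠ 0`. -/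
theorem cubic_nonneg_of_le_card (hS : IsCap (S : Set (Fin n → ZMod 2))) {m : ℤ}
    (hm : ∀ u ≠ 0, m ≤ #{s ∈ S | u ⬝ᵥ s = 0}) (j : ℤ) :
    0 ≤ (3 * #S - 2 * m - 4 * j - 2) * 2 ^ n * #S +
      (#S - 2 * m) * (#S - 2 * j) * (#S - 2 * j - 2) * 2 ^ n -
      8 * (#S - m) * (#S - j) * (#S - j - 1) := by
  have hcubic := sum_erase_zero_cubic hS (#S - 2 * m) (#S - 2 * j) (#S - 2 * j - 2)
  have hnonneg : 0 ≤ ∑ u ∈ univ.erase 0, (charSum S u + (#S - 2 * m)) *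
      (charSum S u + (#S - 2 * j)) * (charSum S u + (#S - 2 * j - 2)) := by
    refine sum_nonneg fun u hu => ?_
    rw [charSum_eq_two_mul_card_sub]
    nlinarith [mul_nonneg (sub_nonneg.2 (hm u (ne_of_mem_erase hu)))
      (sub_mul_sub_one_nonneg #{s ∈ S | u ⬝ᵥ s = 0} j)]
  linarith

theorem exists_ne_zero_card_filter_dotProduct_le_six {S : Finset (Fin 7 → ZMod 2)}
    (hS : IsCap (S : Set (Fin 7 → ZMod 2))) (hcard : #S ≤ 20) :
    ∃ u ≠ 0, #{s ∈ S | u ⬝ᵥ s = 0} ≤ 6 := by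
  by_contra! hlarge
  have hlp := cubic_nonneg_of_le_card hS (m := 7) fun u hu => mod_cast hlarge u hu
  generalize #S = c at hlp hcard
  have h₈ := hlp 8
  have h₉ := hlp 9
  have h₁₀ := hlp 10
  have h₁₁ := hlp 11
  interval_cases c <;> omega

end SmallHyperplaneSection

section AdaptedBasis

variable {K V : Type*} [DivisionRing K] [AddCommGroup V] [Module K V]

theorem exists_linearIndependent_forall_mem (X : ℕ → Set V) (n : ℕ)
    (hX : ∀ i < n, i < finrank K (Submodule.span K (X i))) :
    ∃ v : Fin n → V, LinearIndependent K v ∧ ∀ i : Fin n, v i ∈ X i := by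
  induction n with
  | zero => exact ⟨Fin.elim0, linearIndependent_empty_type, fun i => i.elim0⟩
  | succ n ih =>
    obtain ⟨v, hv, hvX⟩ := ih fun i hi => hX i (hi.trans n.lt_succ_self)
    obtain ⟨x, hx, hxv⟩ : ∃ x ∈ X n, x ∉ Submodule.span K (Set.range v) := by
      by_contra! hsub
      have := FiniteDimensional.span_of_finite K (Set.finite_range v)
      have hle := Submodule.finrank_mono (Submodule.span_le.2 hsub)
      rw [finrank_span_eq_card hv, Fintype.card_fin] at hle
      exact (hX n n.lt_succ_self).not_ge hle
    refine ⟨Fin.snoc v x, linearIndependent_finSnoc.2 ⟨hv, hxv⟩, Fin.lastCases ?_ fun i => ?_⟩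
    · simpa using hx
    · simpa using hvX i

theorem exists_basis_mem_and_repr_eq_zero [FiniteDimensional K V] {n : ℕ} (hn : finrank K V = n)
    (A : Set V) :
    ∃ b : Basis (Fin n) K V, ∀ i : Fin n,
      (↑i < finrank K (Submodule.span K A) → b i ∈ A) ∧
      (finrank K (Submodule.span K A) ≤ i → ∀ a ∈ A, b.repr a i = 0) := by
  set r := finrank K (Submodule.span K A)
  obtain ⟨v, hv, hvA⟩ := exists_linearIndependent_forall_mem (K := K)
    (fun i => if i < r then A else Set.univ) n fun i hi => by
      by_cases hir : i < r
      · rwa [if_pos hir]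
      · rwa [if_neg hir, Submodule.span_univ, finrank_top, hn]
  let b : Basis (Fin n) K V := .mk hv (hv.span_eq_top_of_card_eq_finrank' (by simp [hn])).ge
  have hbA (i : Fin n) (hi : ↑i < r) : b i ∈ A := by
    simpa [b, hi] using hvA i
  have hrn : r ≤ n := hn ▸ Submodule.finrank_le _
  have hspan : Submodule.span K (b '' {i | ↑i < r}) = Submodule.span K A := by
    refine Submodule.eq_of_le_of_finrank_le (Submodule.span_mono ?_) ?_
    · rintro _ ⟨i, hi, rfl⟩
      exact hbA i hi
    · have hli : LinearIndependent K fun i : Fin r => b (Fin.castLE hrn i) :=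
        b.linearIndependent.comp _ (Fin.castLE_injective hrn)
      have hcard := finrank_span_eq_card hli
      rw [Fintype.card_fin] at hcard
      refine hcard.ge.trans (Submodule.finrank_mono (Submodule.span_mono ?_))
      rintro _ ⟨i, rfl⟩
      exact ⟨_, i.2, rfl⟩
  refine ⟨b, fun i => ⟨hbA i, fun hi a ha => ?_⟩⟩
  have hsupp := b.mem_span_image.1 (hspan ▸ Submodule.subset_span ha)
  exact Finsupp.notMem_support_iff.1 fun hmem => (hsupp hmem).not_ge hi

end AdaptedBasis

section BitCode

variable {n : ℕ} {V : Type*} [AddCommGroup V] [Module (ZMod 2) V]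
  (b : Basis (Fin n) (ZMod 2) V)

/-- The number whose binary digits are the coordinates of a vector, so that addition becomes
bitwise exclusive or. -/
noncomputable def bitCode (x : V) : ℕ := Nat.ofBits fun i => decide (b.repr x i = 1)

theorem bitCode_lt (x : V) : bitCode b x < 2 ^ n := Nat.ofBits_lt_two_pow _

theorem testBit_bitCode (x : V) (i : ℕ) :
    (bitCode b x).testBit i = true ↔ ∃ h : i < n, b.repr x ⟨i, h⟩ = 1 := by
  by_cases h : i < n <;> simp [bitCode, Nat.testBit_ofBits, h]

theorem bitCode_injective : Function.Injective (bitCode b) := by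
  intro x y h
  refine b.ext_elem fun i => ?_
  have hbit : b.repr x i = 1 ↔ b.repr y i = 1 := by
    have hx := testBit_bitCode b x i
    rw [h, testBit_bitCode b y i] at hx
    simpa using hx.symm
  generalize b.repr x i = s at hbit ⊢
  generalize b.repr y i = t at hbit ⊢
  decide +revert

theorem bitCode_add (x y : V) : bitCode b (x + y) = bitCode b x ^^^ bitCode b y := by
  have hone : ∀ s t : ZMod 2, s + t = 1 ↔ ¬(s = 1 ↔ t = 1) := by decide
  refine Nat.eq_of_testBit_eq fun i => Bool.eq_iff_iff.2 ?_
  rw [Nat.testBit_xor, Bool.xor_iff_ne, ne_eq,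
    Bool.eq_iff_iff (a := (bitCode b x).testBit i)]
  simp only [testBit_bitCode, map_add, Finsupp.add_apply, hone]
  by_cases h : i < n <;> simp [h]

theorem exists_bitCode_eq {z : ℕ} (hz : z < 2 ^ n) : ∃ x, bitCode b x = z := by
  refine ⟨b.equivFun.symm fun i => if z.testBit i then 1 else 0, Nat.eq_of_testBit_eq fun i => ?_⟩
  rw [Bool.eq_iff_iff, testBit_bitCode]
  have hi : z.testBit i = true → i < n := fun hbit =>
    (Nat.pow_lt_pow_iff_right one_lt_two).1 ((Nat.ge_two_pow_of_testBit hbit).trans_lt hz)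
  simp only [← b.equivFun_apply, LinearEquiv.apply_symm_apply]
  simpa using hi

theorem bitCode_eq_zero_iff {x : V} : bitCode b x = 0 ↔ x = 0 := by
  have hzero : bitCode b 0 = 0 := by
    rw [← add_zero (0 : V), bitCode_add, Nat.xor_self]
  rw [← (bitCode_injective b).eq_iff (a := x), hzero]

theorem bitCode_basis (i : Fin n) : bitCode b (b i) = 2 ^ (i : ℕ) := by
  refine Nat.eq_of_testBit_eq fun j => Bool.eq_iff_iff.2 ?_
  rw [testBit_bitCode, Nat.testBit_two_pow, decide_eq_true_eq]
  simp only [Basis.repr_self, Finsupp.single_apply, Fin.ext_iff]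
  constructor
  · rintro ⟨-, h⟩
    by_contra hij
    simp [hij] at h
  · rintro rfl
    exact ⟨i.2, if_pos rfl⟩

end BitCode

/-- A set `B` of `n`-bit numbers which is independent and dominating in the Cayley graph of the
`n`-bit numbers under bitwise exclusive or with connection set `A`. -/
structure IsIndepDom (n : ℕ) (A B : Finset ℕ) : Prop where
  lt : ∀ b ∈ B, b < 2 ^ n
  indep : ∀ b ∈ B, ∀ a ∈ A, b ^^^ a ∉ B
  dom : ∀ x < 2 ^ n, x ∈ B ∨ ∃ a ∈ A, x ^^^ a ∈ B

theorem mem_image_xor {B : Finset ℕ} {x y : ℕ} : x ∈ B.image (· ^^^ y) ↔ x ^^^ y ∈ B := by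
  rw [mem_image]
  constructor
  · rintro ⟨b, hb, rfl⟩
    rwa [Nat.xor_xor_cancel_right]
  · exact fun h => ⟨_, h, Nat.xor_xor_cancel_right x y⟩

theorem IsIndepDom.translate {n y : ℕ} {A B : Finset ℕ} (h : IsIndepDom n A B) (hy : y < 2 ^ n) :
    IsIndepDom n A (B.image (· ^^^ y)) where
  lt b hb := by
    rw [mem_image_xor] at hb
    simpa using Nat.xor_lt_two_pow (h.lt _ hb) hy
  indep b hb a ha := by
    rw [mem_image_xor] at hb ⊢
    rw [Nat.xor_right_comm]
    exact h.indep _ hb a ha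
  dom x hx := by
    simp only [mem_image_xor, Nat.xor_right_comm x _ y]
    exact h.dom _ (Nat.xor_lt_two_pow hx hy)

theorem IsIndepDom.exists_card_le_div {n r : ℕ} {A B : Finset ℕ} (h : IsIndepDom n A B)
    (hr : r ≤ n) (hA : A ⊆ range (2 ^ r)) :
    ∃ B', IsIndepDom r A B' ∧ #B' ≤ #B / 2 ^ (n - r) := by
  obtain ⟨q, hq, hfiber⟩ := exists_card_fiber_lt_of_card_lt_mul (s := B) (f := (· >>> r))
    (t := range (2 ^ (n - r))) (n := #B / 2 ^ (n - r) + 1)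
    (by rw [card_range]; exact Nat.lt_mul_div_succ _ (by positivity))
  have hlt {y : ℕ} (hy : y < 2 ^ r) : q <<< r ^^^ y < 2 ^ n := by
    have hq' := Nat.shiftLeft_lt (m := r) (mem_range.1 hq)
    rw [Nat.sub_add_cancel hr] at hq'
    exact Nat.xor_lt_two_pow hq' (hy.trans_le (Nat.pow_le_pow_right two_pos hr))
  refine ⟨{y ∈ range (2 ^ r) | q <<< r ^^^ y ∈ B}, ⟨?_, ?_, ?_⟩, ?_⟩
  · exact fun y hy => mem_range.1 (mem_filter.1 hy).1
  · intro y hy a ha hya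
    rw [mem_filter, ← Nat.xor_assoc] at hya
    exact h.indep _ (mem_filter.1 hy).2 a ha hya.2
  · intro y hy
    obtain hB | ⟨a, ha, hB⟩ := h.dom _ (hlt hy)
    · exact Or.inl (mem_filter.2 ⟨mem_range.2 hy, hB⟩)
    · rw [Nat.xor_assoc] at hB
      have hya := Nat.xor_lt_two_pow hy (mem_range.1 (hA ha))
      exact Or.inr ⟨a, ha, mem_filter.2 ⟨mem_range.2 hya, hB⟩⟩
  · refine (card_le_card_of_injOn (q <<< r ^^^ ·) (fun y hy => ?_)
      Nat.xor_right_injective.injOn).trans (Nat.lt_succ_iff.1 hfiber)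
    obtain ⟨hy, hB⟩ := mem_filter.1 (mem_coe.1 hy)
    have hshift : (q <<< r ^^^ y) >>> r = q := by
      rw [Nat.shiftRight_xor_distrib, Nat.shiftLeft_shiftRight,
        Nat.shiftRight_eq_zero y r (mem_range.1 hy), Nat.xor_zero]
    exact mem_coe.2 (mem_filter.2 ⟨hB, hshift⟩)

theorem card_le_length_mul_card {C : List ℕ} {U R : Finset ℕ}
    (h : ∀ u ∈ U, ∃ c ∈ C, u ^^^ c ∈ R) : #U ≤ C.length * #R := by
  have hsub : U ⊆ (C.toFinset ×ˢ R).image fun p => p.2 ^^^ p.1 := by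
    intro u hu
    obtain ⟨c, hc, hR⟩ := h u hu
    exact mem_image.2 ⟨(c, u ^^^ c), mk_mem_product (List.mem_toFinset.2 hc) hR,
      Nat.xor_xor_cancel_right u c⟩
  calc #U ≤ #(C.toFinset ×ˢ R) := (card_le_card hsub).trans card_image_le
    _ = #C.toFinset * #R := card_product _ _
    _ ≤ C.length * #R := Nat.mul_le_mul_right _ C.toFinset_card_le

/-! ### Branch and bound search for dominating sets

Sets of small numbers are bit masks. The code runs in the kernel, so it is written with recursors
and with the functions on `ℕ` that the kernel computes natively. -/

namespace IndepDomSearch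

/-- Evaluates `x` before it is substituted into `f`, which the kernel would not do by itself. -/
def force (x : ℕ) (f : ℕ → Bool) : Bool :=
  Nat.rec (motive := fun _ => Bool) (f 0) (fun n _ => f (Nat.succ n)) x

theorem force_eq (x : ℕ) (f : ℕ → Bool) : force x f = f x := by
  cases x <;> rfl

/-- Branches on a Boolean. -/
def sel (b t e : Bool) : Bool := Bool.rec (motive := fun _ => Bool) e t b

theorem sel_eq (b t e : Bool) : sel b t e = if b then t else e := by
  cases b <;> rfl

/-- Branches on the bit `x` of the mask `m`. -/
def ifBit (m x : ℕ) (t e : Bool) : Bool :=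
  Nat.rec (motive := fun _ => Bool) e (fun _ _ => t) (Nat.land (Nat.shiftRight m x) 1)

/-- The mask of the set of the elements of `L`. -/
def mask (L : List ℕ) : ℕ :=
  List.rec (motive := fun _ => ℕ) 0 (fun x _ ih => Nat.lor (Nat.shiftLeft 1 x) ih) L

/-- The mask of `w ^^^ C`. -/
def nbhd (C : List ℕ) (w : ℕ) : ℕ :=
  List.rec (motive := fun _ => ℕ) 0 (fun c _ ih => Nat.lor (Nat.shiftLeft 1 (Nat.xor w c)) ih) C

/-- The mask of a difference of sets. -/
def diff (m l : ℕ) : ℕ := Nat.xor m (Nat.land m l)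

/-- The number of elements of `w ^^^ C` in the mask `und`. -/
def count (C : List ℕ) (w und : ℕ) : ℕ :=
  List.rec (motive := fun _ => ℕ) 0
    (fun c _ ih => Nat.add (Nat.land (Nat.shiftRight und (Nat.xor w c)) 1) ih) C

/-- Whether no two elements of `P`, whose mask is `m`, have exclusive or `x`. -/
def missed (m : ℕ) (P : List ℕ) (x : ℕ) : Bool :=
  List.rec (motive := fun _ => Bool) true (fun p _ ih => ifBit m (Nat.xor p x) false ih) P

/-- Whether some target is not the exclusive or of two elements of `P`. -/
def leaf (targets P : List ℕ) : Bool :=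
  force (mask P) fun m =>
    List.rec (motive := fun _ => Bool) false (fun x _ ih => sel (missed m P x) true ih) targets

/-- Adds `w` to the list `P` of placed elements and continues with `next`. The masks `und` and `av`
are those of the elements not yet dominated and of those that may still be placed. The slack `s`
bounds how often the remaining closed neighbourhoods may overlap; if it becomes negative, the
branch is closed. -/
def place (C : List ℕ) (next : ℕ → ℕ → ℕ → List ℕ → Bool) (und s : ℕ) (P : List ℕ) (w av : ℕ) :
    Bool :=
  force (Nat.add (count C w und) s) fun s =>
    sel (Nat.ble C.length s)
      (force (diff und (nbhd C w)) fun und =>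
        force (diff av (nbhd C w)) fun av =>
          force (Nat.sub s C.length) fun s => next und av s (w :: P))
      true

/-- Tries all available elements of `v ^^^ C` in turn; those already tried become unavailable. -/
def tryEach (f : ℕ → ℕ → Bool) (v : ℕ) (C : List ℕ) : ℕ → Bool :=
  List.rec (motive := fun _ => ℕ → Bool) (fun _ => true)
    (fun c _ ih av => force (Nat.xor v c) fun w =>
      ifBit av w (sel (f w av) (force (Nat.xor av (Nat.shiftLeft 1 w)) ih) false) (ih av)) C

/-- Branches on the element dominating `v`. -/
def step (C : List ℕ) (v : ℕ) (next : ℕ → ℕ → ℕ → List ℕ → Bool) (und av s : ℕ) (P : List ℕ) :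
    Bool :=
  ifBit und v (tryEach (place C next und s P) v C av) (next und av s P)

/-- Dominates all elements below `v` in decreasing order, and checks the results with `leaf`. -/
def search (C targets : List ℕ) (v : ℕ) : ℕ → ℕ → ℕ → List ℕ → Bool :=
  Nat.rec (motive := fun _ => ℕ → ℕ → ℕ → List ℕ → Bool) (fun _ _ _ P => leaf targets P)
    (fun v ih => step C v ih) v

/-- Places all elements of a list. -/
def placeAll (C : List ℕ) (next : ℕ → ℕ → ℕ → List ℕ → Bool) :
    List ℕ → ℕ → ℕ → ℕ → List ℕ → Bool
  | [], und, av, s, P => next und av s P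
  | w :: ws, und, av, s, P => av.testBit w && place C (placeAll C next ws) und s P w av

/-- Whether the search shows that every independent dominating set of at most `K` elements which
contains `seeds` misses a target. -/
def refutes (n : ℕ) (A : List ℕ) (K : ℕ) (seeds targets : List ℕ) : Bool :=
  decide ((0 :: A).length * K < 2 ^ n) ||
    placeAll (0 :: A) (search (0 :: A) targets (2 ^ n)) seeds (2 ^ 2 ^ n - 1) (2 ^ 2 ^ n - 1)
      ((0 :: A).length * K - 2 ^ n) []

/-- The set encoded by a mask. -/
def support (m : ℕ) : Finset ℕ := m.bitIndices.toFinset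

theorem mem_support {m x : ℕ} : x ∈ support m ↔ m.testBit x := by
  rw [support, List.mem_toFinset, Nat.mem_bitIndices]

theorem ifBit_eq (m x : ℕ) (t e : Bool) : ifBit m x t e = if x ∈ support m then t else e := by
  have h : ifBit m x t e = if m >>> x &&& 1 ≠ 0 then t else e := by
    change Nat.rec (motive := fun _ => Bool) e (fun _ _ => t) (m >>> x &&& 1) = _
    cases m >>> x &&& 1 <;> simp
  rw [h]
  simp only [mem_support, Nat.testBit, bne_iff_ne, Nat.land_comm]

theorem support_one_shiftLeft (x : ℕ) : support (1 <<< x) = {x} := by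
  ext y
  simp only [mem_support, Nat.one_shiftLeft, Nat.testBit_two_pow, mem_singleton,
    decide_eq_true_eq, eq_comm (a := x)]

theorem support_lor (m l : ℕ) : support (m ||| l) = support m ∪ support l := by
  ext x
  simp only [mem_support, Nat.testBit_or, Bool.or_eq_true, mem_union]

theorem support_mask (L : List ℕ) : support (mask L) = L.toFinset := by
  induction L with
  | nil => rfl
  | cons x L ih =>
    change support (1 <<< x ||| mask L) = _
    rw [support_lor, support_one_shiftLeft, ih, List.toFinset_cons, insert_eq]

theorem nbhd_eq_mask (C : List ℕ) (w : ℕ) : nbhd C w = mask (C.map (w ^^^ ·)) := by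
  induction C with
  | nil => rfl
  | cons c C ih => exact congrArg (1 <<< (w ^^^ c) ||| ·) ih

theorem mem_support_nbhd {C : List ℕ} {w x : ℕ} :
    x ∈ support (nbhd C w) ↔ ∃ c ∈ C, w ^^^ c = x := by
  rw [nbhd_eq_mask, support_mask, List.mem_toFinset, List.mem_map]

theorem support_diff (m l : ℕ) : support (diff m l) = support m \ support l := by
  ext x
  change x ∈ support (m ^^^ (m &&& l)) ↔ _
  simp only [mem_support, mem_sdiff, Nat.testBit_xor, Nat.testBit_and]
  cases m.testBit x <;> cases l.testBit x <;> decide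

theorem support_xor_one_shiftLeft {m x : ℕ} (hx : x ∈ support m) :
    support (m ^^^ 1 <<< x) = (support m).erase x := by
  ext y
  rw [mem_support] at hx
  rw [mem_erase, mem_support, mem_support, Nat.testBit_xor, Nat.one_shiftLeft,
    Nat.testBit_two_pow]
  by_cases h : x = y
  · simp [← h, hx]
  · simp [h, Ne.symm h]

theorem card_support_le_card_support_diff_add_count (C : List ℕ) (w und : ℕ) :
    #(support und) ≤ #(support (diff und (nbhd C w))) + count C w und := by
  have hcount : #(support und ∩ support (nbhd C w)) ≤ count C w und := by
    rw [nbhd_eq_mask, support_mask]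
    induction C with
    | nil => simp
    | cons c C ih =>
      have hbit : count (c :: C) w und = (und >>> (w ^^^ c) &&& 1) + count C w und := rfl
      rw [hbit, List.map_cons, List.toFinset_cons]
      by_cases hc : w ^^^ c ∈ support und
      · have hone : und >>> (w ^^^ c) &&& 1 ≠ 0 := by
          simpa [mem_support, Nat.testBit, Nat.land_comm] using hc
        rw [inter_insert_of_mem hc]
        exact (card_insert_le _ _).trans (by omega)
      · rw [inter_insert_of_notMem hc]
        omega
  have hsplit := card_sdiff_add_card_inter (support und) (support (nbhd C w))
  rw [support_diff]
  omega

/-- The state of the search is compatible with the independent dominating set `B`: the masks and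
the list `P` of placed elements satisfy the invariants of a branch that leads to `B`. -/
structure Consistent (C : List ℕ) (B : Finset ℕ) (und av s : ℕ) (P : List ℕ) : Prop where
  subset : support av ⊆ support und
  dom : ∀ u ∈ support und, ∃ c ∈ C, u ^^^ c ∈ B ∩ support av
  mem_iff : ∀ b, b ∈ B ↔ b ∈ P ∨ b ∈ B ∩ support av
  slack : C.length * #(B ∩ support av) ≤ #(support und) + s

variable {C : List ℕ} {B : Finset ℕ} {und av s w v : ℕ} {P : List ℕ}
  {next : ℕ → ℕ → ℕ → List ℕ → Bool}

theorem inter_support_diff_nbhd (h0 : 0 ∈ C) (hB : ∀ b ∈ B, ∀ c ∈ C, b ^^^ c ∈ B → c = 0)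
    (hw : w ∈ B) : B ∩ support (diff av (nbhd C w)) = (B ∩ support av).erase w := by
  ext x
  simp only [support_diff, mem_inter, mem_sdiff, mem_support_nbhd, mem_erase]
  constructor
  · rintro ⟨hx, hav, hfar⟩
    refine ⟨?_, hx, hav⟩
    rintro rfl
    exact hfar ⟨0, h0, Nat.xor_zero x⟩
  · rintro ⟨hne, hx, hav⟩
    refine ⟨hx, hav, ?_⟩
    rintro ⟨c, hc, rfl⟩
    rw [hB w hw c hc hx, Nat.xor_zero] at hne
    exact hne rfl

theorem Consistent.place (h : Consistent C B und av s P) (h0 : 0 ∈ C)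
    (hB : ∀ b ∈ B, ∀ c ∈ C, b ^^^ c ∈ B → c = 0) (hw : w ∈ B ∩ support av) :
    C.length ≤ count C w und + s ∧
      Consistent C B (diff und (nbhd C w)) (diff av (nbhd C w))
        (count C w und + s - C.length) (w :: P) := by
  have hrest := inter_support_diff_nbhd (av := av) h0 hB (mem_inter.1 hw).1
  have hdom : ∀ u ∈ support (diff und (nbhd C w)),
      ∃ c ∈ C, u ^^^ c ∈ B ∩ support (diff av (nbhd C w)) := by
    intro u hu
    rw [support_diff, mem_sdiff] at hu
    obtain ⟨c, hc, huc⟩ := h.dom u hu.1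
    refine ⟨c, hc, hrest ▸ mem_erase.2 ⟨?_, huc⟩⟩
    rintro rfl
    exact hu.2 (mem_support_nbhd.2 ⟨c, hc, Nat.xor_xor_cancel_right u c⟩)
  have hcard := card_erase_add_one hw
  have hund := card_support_le_card_support_diff_add_count C w und
  have hle := card_le_length_mul_card hdom
  have hslack := h.slack
  rw [← hcard, mul_add, mul_one, ← hrest] at hslack
  refine ⟨by omega, ?_, hdom, fun b => ?_, by omega⟩
  · rw [support_diff, support_diff]
    exact sdiff_subset_sdiff h.subset subset_rfl
  · rw [hrest, mem_erase, List.mem_cons, h.mem_iff b]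
    by_cases hb : b = w
    · simp [hb, hw]
    · simp [hb]

theorem Consistent.drop (h : Consistent C B und av s P) (hav : w ∈ support av) (hw : w ∉ B) :
    Consistent C B und (av ^^^ 1 <<< w) s P := by
  have hsupp := support_xor_one_shiftLeft hav
  have hinter : B ∩ support (av ^^^ 1 <<< w) = B ∩ support av := by
    rw [hsupp, inter_erase, erase_eq_of_notMem fun hmem => hw (mem_inter.1 hmem).1]
  refine ⟨?_, ?_, ?_, ?_⟩
  · rw [hsupp]
    exact (erase_subset w _).trans h.subset
  all_goals rw [hinter]
  exacts [h.dom, h.mem_iff, h.slack]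

theorem Consistent.eq_of_support_eq_empty (h : Consistent C B und av s P) (hund : support und = ∅) :
    B = P.toFinset := by
  have hav : support av = ∅ := subset_empty.1 (hund ▸ h.subset)
  ext b
  rw [h.mem_iff b, hav, inter_empty, List.mem_toFinset, or_iff_left (notMem_empty b)]

theorem exists_consistent_of_place (h : Consistent C B und av s P) (h0 : 0 ∈ C)
    (hB : ∀ b ∈ B, ∀ c ∈ C, b ^^^ c ∈ B → c = 0) (hw : w ∈ B ∩ support av)
    (hrun : place C next und s P w av = true) :
    ∃ und' av' s' P', Consistent C B und' av' s' P' ∧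
      support und' = support und \ support (nbhd C w) ∧ next und' av' s' P' = true := by
  obtain ⟨hlen, hnext⟩ := h.place h0 hB hw
  refine ⟨_, _, _, _, hnext, support_diff _ _, ?_⟩
  simpa [place, force_eq, sel_eq, hlen] using hrun

theorem tryEach_cons (f : ℕ → ℕ → Bool) (v c : ℕ) (D : List ℕ) (av : ℕ) :
    tryEach f v (c :: D) av =
      if v ^^^ c ∈ support av then
        f (v ^^^ c) av && tryEach f v D (av ^^^ 1 <<< (v ^^^ c))
      else tryEach f v D av := by
  have hunfold : tryEach f v (c :: D) av = force (v ^^^ c) fun w =>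
      ifBit av w (sel (f w av) (force (av ^^^ 1 <<< w) (tryEach f v D)) false)
        (tryEach f v D av) := rfl
  rw [hunfold, force_eq, ifBit_eq, sel_eq, force_eq, Bool.if_false_right, Bool.decide_eq_true]

theorem exists_consistent_of_tryEach (h : Consistent C B und av s P) (h0 : 0 ∈ C)
    (hB : ∀ b ∈ B, ∀ c ∈ C, b ^^^ c ∈ B → c = 0) {D : List ℕ} (hD : D ⊆ C)
    (hv : ∃ c ∈ D, v ^^^ c ∈ B ∩ support av)
    (hrun : tryEach (place C next und s P) v D av = true) :
    ∃ und' av' s' P', Consistent C B und' av' s' P' ∧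
      support und' ⊆ (support und).erase v ∧ next und' av' s' P' = true := by
  induction D generalizing av with
  | nil => simp at hv
  | cons c D ih =>
    have hD' : D ⊆ C := fun d hd => hD (List.mem_cons_of_mem c hd)
    rw [tryEach_cons] at hrun
    by_cases hav : v ^^^ c ∈ support av
    · rw [if_pos hav, Bool.and_eq_true] at hrun
      by_cases hw : v ^^^ c ∈ B
      · obtain ⟨und', av', s', P', h', hsupp, hnext⟩ :=
          exists_consistent_of_place h h0 hB (mem_inter.2 ⟨hw, hav⟩) hrun.1
        refine ⟨und', av', s', P', h', fun x hx => ?_, hnext⟩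
        rw [hsupp, mem_sdiff] at hx
        refine mem_erase.2 ⟨?_, hx.1⟩
        rintro rfl
        exact hx.2 (mem_support_nbhd.2 ⟨c, hD List.mem_cons_self, Nat.xor_xor_cancel_right x c⟩)
      · refine ih (h.drop hav hw) hD' ?_ hrun.2
        rw [support_xor_one_shiftLeft hav, inter_erase,
          erase_eq_of_notMem fun hmem => hw (mem_inter.1 hmem).1]
        exact (List.exists_mem_cons_iff _ _ _).1 hv |>.resolve_left fun hc =>
          hw (mem_inter.1 hc).1
    · rw [if_neg hav] at hrun
      refine ih h hD' ?_ hrun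
      exact (List.exists_mem_cons_iff _ _ _).1 hv |>.resolve_left fun hc =>
        hav (mem_inter.1 hc).2

theorem exists_leaf_of_search (h0 : 0 ∈ C) (hB : ∀ b ∈ B, ∀ c ∈ C, b ^^^ c ∈ B → c = 0)
    {targets : List ℕ} (h : Consistent C B und av s P) (hv : support und ⊆ range v)
    (hrun : search C targets v und av s P = true) :
    ∃ P', B = P'.toFinset ∧ leaf targets P' = true := by
  induction v generalizing und av s P with
  | zero => exact ⟨P, h.eq_of_support_eq_empty (subset_empty.1 hv), hrun⟩
  | succ v ih =>
    have hstep : search C targets (v + 1) und av s P =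
        if v ∈ support und then
          tryEach (place C (search C targets v) und s P) v C av
        else search C targets v und av s P := ifBit_eq _ _ _ _
    rw [range_add_one, subset_insert_iff] at hv
    rw [hstep] at hrun
    split_ifs at hrun with hmem
    · obtain ⟨und', av', s', P', h', hsupp, hnext⟩ :=
        exists_consistent_of_tryEach h h0 hB (List.Subset.refl C) (h.dom v hmem) hrun
      exact ih h' (hsupp.trans hv) hnext
    · exact ih h (erase_eq_of_notMem hmem ▸ hv) hrun

theorem exists_consistent_of_placeAll (h0 : 0 ∈ C)
    (hB : ∀ b ∈ B, ∀ c ∈ C, b ^^^ c ∈ B → c = 0) {seeds : List ℕ} (hseeds : ∀ w ∈ seeds, w ∈ B)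
    (h : Consistent C B und av s P) (hrun : placeAll C next seeds und av s P = true) :
    ∃ und' av' s' P', Consistent C B und' av' s' P' ∧ support und' ⊆ support und ∧
      next und' av' s' P' = true := by
  induction seeds generalizing und av s P with
  | nil => exact ⟨und, av, s, P, h, subset_rfl, hrun⟩
  | cons w ws ih =>
    rw [placeAll, Bool.and_eq_true] at hrun
    obtain ⟨und₁, av₁, s₁, P₁, h₁, hsupp₁, hrun₁⟩ := exists_consistent_of_place h h0 hB
      (mem_inter.2 ⟨hseeds w List.mem_cons_self, mem_support.2 hrun.1⟩) hrun.2
    obtain ⟨und', av', s', P', h', hsupp, hnext⟩ :=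
      ih (fun x hx => hseeds x (List.mem_cons_of_mem w hx)) h₁ hrun₁
    exact ⟨und', av', s', P', h', hsupp.trans (hsupp₁ ▸ sdiff_subset), hnext⟩

theorem missed_eq_true_iff {m x : ℕ} : missed m P x = true ↔ ∀ p ∈ P, p ^^^ x ∉ support m := by
  induction P with
  | nil => simp [missed]
  | cons p P ih =>
    have hcons : missed m (p :: P) x = if p ^^^ x ∈ support m then false else missed m P x :=
      ifBit_eq _ _ _ _
    rw [hcons, List.forall_mem_cons, ← ih]
    split_ifs with h <;> simp [h]

theorem leaf_eq_true_iff {targets : List ℕ} :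
    leaf targets P = true ↔ ∃ x ∈ targets, ∀ p ∈ P, p ^^^ x ∉ P := by
  have hany : leaf targets P = targets.any (missed (mask P) P) := by
    rw [leaf, force_eq]
    induction targets with
    | nil => rfl
    | cons x targets ih =>
      rw [List.any_cons, ← ih]
      exact (sel_eq _ _ _).trans (by cases missed (mask P) P x <;> rfl)
  simp only [hany, List.any_eq_true, missed_eq_true_iff, support_mask, List.mem_toFinset]

theorem exists_target_of_refutes {n K : ℕ} {A seeds targets : List ℕ}
    (hB : IsIndepDom n A.toFinset B) (hK : #B ≤ K) (hseeds : ∀ w ∈ seeds, w ∈ B)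
    (hrun : refutes n A K seeds targets = true) : ∃ x ∈ targets, ∀ b ∈ B, b ^^^ x ∉ B := by
  have hfull : support (2 ^ 2 ^ n - 1) = range (2 ^ n) := by
    ext x
    rw [mem_support, Nat.testBit_two_pow_sub_one, decide_eq_true_eq, mem_range]
  have hinter : B ∩ range (2 ^ n) = B :=
    inter_eq_left.2 fun b hb => mem_range.2 (hB.lt b hb)
  have hdom : ∀ u ∈ range (2 ^ n), ∃ c ∈ 0 :: A, u ^^^ c ∈ B := by
    intro u hu
    rw [List.exists_mem_cons_iff, Nat.xor_zero]
    simpa only [List.mem_toFinset] using hB.dom u (mem_range.1 hu)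
  have hindep : ∀ b ∈ B, ∀ c ∈ 0 :: A, b ^^^ c ∈ B → c = 0 := by
    intro b hb c hc hbc
    exact (List.mem_cons.1 hc).resolve_right fun hcA =>
      hB.indep b hb c (List.mem_toFinset.2 hcA) hbc
  have hcard := Nat.mul_le_mul_left (0 :: A).length hK
  have hle := card_le_length_mul_card hdom
  rw [card_range] at hle
  have hstart : Consistent (0 :: A) B (2 ^ 2 ^ n - 1) (2 ^ 2 ^ n - 1)
      ((0 :: A).length * K - 2 ^ n) [] := by
    refine ⟨subset_rfl, by rwa [hfull, hinter], fun b => ?_, ?_⟩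
    · rw [hfull, hinter, or_iff_right List.not_mem_nil]
    · rw [hfull, hinter, card_range]
      omega
  rw [refutes, decide_eq_false (hle.trans hcard).not_gt, Bool.false_or] at hrun
  obtain ⟨und, av, s, P, h, hund, hsearch⟩ :=
    exists_consistent_of_placeAll List.mem_cons_self hindep hseeds hstart hrun
  obtain ⟨P', rfl, hleaf⟩ :=
    exists_leaf_of_search List.mem_cons_self hindep h (hund.trans hfull.subset) hsearch
  simpa only [List.mem_toFinset] using leaf_eq_true_iff.1 hleaf

end IndepDomSearch

/-- The lists of `r + j` numbers below `2 ^ r` without repetitions which begin with the powers of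
two and contain no exclusive or of two of their elements. -/
def xorFreeLists (r j : ℕ) : List (List ℕ) :=
  let e := (List.range r).map (2 ^ ·)
  (((List.range (2 ^ r)).filter (· ∉ e)).sublistsLen j).map (e ++ ·) |>.filter fun L =>
    ∀ a ∈ L, ∀ b ∈ L, a ^^^ b ∉ L

theorem exists_mem_xorFreeLists {r : ℕ} {A : Finset ℕ} (hA : A ⊆ range (2 ^ r))
    (hpow : ∀ i < r, 2 ^ i ∈ A) (hfree : ∀ a ∈ A, ∀ b ∈ A, a ^^^ b ∉ A) :
    r ≤ #A ∧ ∃ L ∈ xorFreeLists r (#A - r), L.toFinset = A ∧ L.length = #A := by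
  set e := (List.range r).map (2 ^ ·) with he
  set E := ((List.range (2 ^ r)).filter (· ∉ e)).filter (· ∈ A) with hE
  have htoFinset : (e ++ E).toFinset = A := by
    ext a
    have hpow' : a ∈ e → a ∈ A := by
      rw [he, List.mem_map]
      rintro ⟨i, hi, rfl⟩
      exact hpow i (List.mem_range.1 hi)
    have hlt : a ∈ A → a < 2 ^ r := fun ha => mem_range.1 (hA ha)
    simp only [hE, List.mem_toFinset, List.mem_append, List.mem_filter, List.mem_range,
      decide_eq_true_eq]
    tauto
  have hnodup : (e ++ E).Nodup := by
    refine List.Nodup.append ?_ (List.nodup_range.filter _ |>.filter _) ?_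
    · exact List.nodup_range.map (Nat.pow_right_injective le_rfl)
    · intro a ha haE
      simp [hE, ha] at haE
  have hlength : (e ++ E).length = #A := by
    rw [← htoFinset, List.toFinset_card_of_nodup hnodup]
  have hlength' : r + E.length = #A := by
    rw [← hlength, List.length_append, he, List.length_map, List.length_range]
  refine ⟨by omega, e ++ E, ?_, htoFinset, hlength⟩
  rw [xorFreeLists, List.mem_filter, decide_eq_true_eq]
  refine ⟨List.mem_map_of_mem (List.mem_sublistsLen.2 ⟨List.filter_sublist, by omega⟩), ?_⟩
  simpa only [← List.mem_toFinset, htoFinset] using hfree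

/-- The xor-free lists for which the search needs the covering condition. -/
def hardLists : List (List ℕ) :=
  [[1, 2, 4], [1, 2, 4, 8], [1, 2, 4, 8, 16, 31], [1, 2, 4, 8, 16, 32]]

theorem refutes_of_notMem_hardLists : ∀ r < 7, ∀ j < 7 - r, ∀ L ∈ xorFreeLists r j,
    L ∈ hardLists ∨
      IndepDomSearch.refutes r L ((20 - L.length) / 2 ^ (6 - r)) [] [] = true := by
  decide +kernel

set_option maxHeartbeats 4000000 in
-- Kernel evaluation of the searches counts towards the limit.
theorem exists_refutes_of_mem_hardLists : ∀ L ∈ hardLists, ∃ c targets,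
    (∀ x ∈ c :: targets, x < 64 ∧ x ≠ 0 ∧ x ∉ L ∧ ∀ a ∈ L, a ^^^ x ∉ L) ∧
      IndepDomSearch.refutes 6 L (20 - L.length) [63, 63 ^^^ c] targets = true := by
  rw [hardLists]
  simp only [List.forall_mem_cons, List.not_mem_nil, IsEmpty.forall_iff, implies_true, and_true]
  exact ⟨⟨8, [9, 10, 11, 18, 26, 17, 25, 24, 16], by decide +kernel⟩,
    ⟨15, [], by decide +kernel⟩,
    ⟨45, [41, 44, 40, 47, 61, 37, 50, 32, 56, 55, 42, 38, 49, 62, 46], by decide +kernel⟩,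
    ⟨43, [47, 31, 62, 61, 35], by decide +kernel⟩⟩

/-- Translating by `b ^^^ y` carries `b` and `b ^^^ c` to the seeds `y` and `y ^^^ c`. -/
theorem IsIndepDom.exists_target_of_refutes {n K y c : ℕ} {L targets : List ℕ} {B : Finset ℕ}
    (hB : IsIndepDom n L.toFinset B) (hK : #B ≤ K) (hy : y < 2 ^ n) (hc : ∃ b ∈ B, b ^^^ c ∈ B)
    (hrun : IndepDomSearch.refutes n L K [y, y ^^^ c] targets = true) :
    ∃ x ∈ targets, ∀ b ∈ B, b ^^^ x ∉ B := by
  obtain ⟨b, hb, hbc⟩ := hc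
  have hseeds : ∀ w ∈ [y, y ^^^ c], w ∈ B.image (· ^^^ (b ^^^ y)) := by
    have hyb : y ^^^ (b ^^^ y) = b := by rw [Nat.xor_comm b y, Nat.xor_xor_cancel_left]
    simp only [List.forall_mem_cons, mem_image_xor, Nat.xor_right_comm y c, hyb]
    exact ⟨hb, hbc, List.forall_mem_nil _⟩
  obtain ⟨x, hx, hmiss⟩ := IndepDomSearch.exists_target_of_refutes
    (hB.translate (Nat.xor_lt_two_pow (hB.lt b hb) hy)) (card_image_le.trans hK) hseeds hrun
  refine ⟨x, hx, fun d hd hdx => hmiss (d ^^^ (b ^^^ y)) (mem_image_of_mem _ hd) ?_⟩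
  rwa [mem_image_xor, Nat.xor_right_comm, Nat.xor_xor_cancel_right]

theorem IsIndepDom.twenty_lt_card_add_card {r : ℕ} {A B : Finset ℕ} (hr : r ≤ 6)
    (hA : A ⊆ range (2 ^ r)) (hcard : #A ≤ 6) (hpow : ∀ i < r, 2 ^ i ∈ A)
    (hfree : ∀ a ∈ A, ∀ b ∈ A, a ^^^ b ∉ A) (hB : IsIndepDom 6 A B)
    (hcover : ∀ x < 64, x ≠ 0 → x ∉ A → (∀ a ∈ A, a ^^^ x ∉ A) → ∃ b ∈ B, b ^^^ x ∈ B) :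
    20 < #A + #B := by
  by_contra! hle
  obtain ⟨hrA, L, hL, rfl, hlength⟩ := exists_mem_xorFreeLists hA hpow hfree
  simp only [List.mem_toFinset] at hcover
  obtain hhard | hrefutes := refutes_of_notMem_hardLists r (by omega) _ (by omega) L hL
  · obtain ⟨c, targets, hx, hrefutes⟩ := exists_refutes_of_mem_hardLists L hhard
    have hcover' : ∀ x ∈ c :: targets, ∃ b ∈ B, b ^^^ x ∈ B := fun x hxc =>
      hcover x (hx x hxc).1 (hx x hxc).2.1 (hx x hxc).2.2.1 (hx x hxc).2.2.2
    obtain ⟨x, hxt, hmiss⟩ := hB.exists_target_of_refutes (by omega) (by decide)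
      (hcover' c List.mem_cons_self) hrefutes
    obtain ⟨b, hb, hbx⟩ := hcover' x (List.mem_cons_of_mem c hxt)
    exact hmiss b hb hbx
  · obtain ⟨B', hB', hcard'⟩ := hB.exists_card_le_div hr hA
    have hcard'' : #B' ≤ (20 - L.length) / 2 ^ (6 - r) :=
      hcard'.trans (Nat.div_le_div_right (by omega))
    simpa using IndepDomSearch.exists_target_of_refutes hB' hcard'' (by simp) hrefutes

theorem twenty_lt_card_add_card_of_finrank_eq_six {V : Type*} [AddCommGroup V]
    [Module (ZMod 2) V] (hV : finrank (ZMod 2) V = 6) {A B : Finset V} (hcard : #A ≤ 6)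
    (hfree : ∀ a ∈ A, ∀ b ∈ A, a + b ∉ A) (hindep : ∀ b ∈ B, ∀ a ∈ A, b + a ∉ B)
    (hdom : ∀ x, x ∈ B ∨ ∃ a ∈ A, x + a ∈ B)
    (hcover : ∀ x, x ≠ 0 → x ∉ A → (∀ a ∈ A, a + x ∉ A) → ∃ b ∈ B, b + x ∈ B) :
    20 < #A + #B := by
  have := Module.finite_of_finrank_pos (R := ZMod 2) (M := V) (by omega)
  obtain ⟨b, hb⟩ := exists_basis_mem_and_repr_eq_zero hV (A : Set V)
  set r := finrank (ZMod 2) (Submodule.span (ZMod 2) (A : Set V))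
  have hr : r ≤ 6 := hV ▸ Submodule.finrank_le _
  have hmem (C : Finset V) (x : V) : bitCode b x ∈ C.image (bitCode b) ↔ x ∈ C :=
    (bitCode_injective b).mem_finset_image
  rw [← card_image_of_injective A (bitCode_injective b),
    ← card_image_of_injective B (bitCode_injective b)]
  refine IsIndepDom.twenty_lt_card_add_card hr ?_ (card_image_le.trans hcard) ?_ ?_
    ⟨?_, ?_, ?_⟩ ?_
  · refine image_subset_iff.2 fun a ha => mem_range.2 (Nat.lt_pow_two_of_testBit _ fun i hi => ?_)
    rw [Bool.eq_false_iff, ne_eq, testBit_bitCode]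
    rintro ⟨h, hone⟩
    rw [(hb ⟨i, h⟩).2 hi a ha] at hone
    exact zero_ne_one hone
  · intro i hi
    rw [← bitCode_basis b ⟨i, hi.trans_le hr⟩, hmem]
    exact (hb _).1 hi
  · simp only [forall_mem_image, ← bitCode_add, hmem]
    exact hfree
  · simp only [forall_mem_image]
    exact fun x _ => bitCode_lt b x
  · simp only [forall_mem_image, ← bitCode_add, hmem]
    exact hindep
  · intro z hz
    obtain ⟨x, rfl⟩ := exists_bitCode_eq b hz
    simp only [exists_mem_image, ← bitCode_add, hmem]
    exact hdom x
  · intro z hz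
    obtain ⟨x, rfl⟩ := exists_bitCode_eq b hz
    simp only [forall_mem_image, exists_mem_image, ← bitCode_add, hmem, ne_eq,
      bitCode_eq_zero_iff]
    exact hcover x

section Hyperplane

variable {n : ℕ} {S : Finset (Fin n → ZMod 2)} {f : Dual (ZMod 2) (Fin n → ZMod 2)}
  {p : Fin n → ZMod 2}

theorem CompleteCap.exists_add_mem (hS : CompleteCap (S : Set (Fin n → ZMod 2)))
    {x : Fin n → ZMod 2} (hx : x ≠ 0) (hxS : x ∉ S) : ∃ s ∈ S, s + x ∈ S := by
  obtain ⟨a, ha, b, hb, -, rfl⟩ := hS.2.2 x hx (mt mem_coe.1 hxS)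
  exact ⟨a, mem_coe.1 ha, by rwa [← add_assoc, ZModModule.add_self, zero_add]⟩

theorem eq_zero_or_exists_ker_add_eq {V : Type*} [AddCommGroup V] [Module (ZMod 2) V]
    {f : Dual (ZMod 2) V} {p : V} (hp : f p = 1) (x : V) :
    f x = 0 ∨ ∃ w : LinearMap.ker f, p + w = x := by
  have hzmod : ∀ z : ZMod 2, z = 0 ∨ z - 1 = 0 := by decide
  refine (hzmod (f x)).imp_right fun hx => ⟨⟨x - p, ?_⟩, add_sub_cancel p x⟩
  rwa [LinearMap.mem_ker, map_sub, hp]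

theorem CompleteCap.exists_ker_add_mem (hS : CompleteCap (S : Set (Fin n → ZMod 2)))
    (hp : f p = 1) {w : LinearMap.ker f} (hw : p + w ∉ S) :
    ∃ a : LinearMap.ker f, ↑a ∈ S ∧ p + ↑(w + a) ∈ S := by
  have hpw : p + w ≠ 0 := fun h => by simpa [hp] using congrArg f h
  obtain ⟨s, hs, hsw⟩ := hS.exists_add_mem hpw hw
  obtain hfs | ⟨v, rfl⟩ := eq_zero_or_exists_ker_add_eq hp s
  · refine ⟨⟨s, hfs⟩, hs, ?_⟩
    rwa [Submodule.coe_add, ← add_assoc, add_comm]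
  · have hvw : p + v + (p + w) = ↑(v + w) := by
      rw [Submodule.coe_add, add_add_add_comm, ZModModule.add_self, zero_add]
    refine ⟨v + w, hvw ▸ hsw, ?_⟩
    rwa [add_left_comm, ZModModule.add_self, add_zero]

theorem CompleteCap.exists_add_ker_mem (hS : CompleteCap (S : Set (Fin n → ZMod 2)))
    (hp : f p = 1) {w : LinearMap.ker f} (hw : w ≠ 0) (hwS : ↑w ∉ S)
    (hfree : ∀ a : LinearMap.ker f, ↑a ∈ S → ↑(a + w) ∉ S) :
    ∃ v : LinearMap.ker f, p + v ∈ S ∧ p + ↑(v + w) ∈ S := by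
  obtain ⟨s, hs, hsw⟩ := hS.exists_add_mem (Subtype.coe_ne_coe.2 hw) hwS
  obtain hfs | ⟨v, rfl⟩ := eq_zero_or_exists_ker_add_eq hp s
  · exact (hfree ⟨s, hfs⟩ hs hsw).elim
  · exact ⟨v, hs, by rwa [Submodule.coe_add, ← add_assoc]⟩

theorem CompleteCap.twenty_lt_card_of_card_filter_le_six {S : Finset (Fin 7 → ZMod 2)}
    (hS : CompleteCap (S : Set (Fin 7 → ZMod 2))) {f : Dual (ZMod 2) (Fin 7 → ZMod 2)}
    (hf : f ≠ 0) (hcard : #{s ∈ S | f s = 0} ≤ 6) : 20 < #S := by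
  classical
  obtain ⟨p, hp⟩ := LinearMap.surjective hf 1
  have hker : finrank (ZMod 2) (LinearMap.ker f) = 6 := by
    simpa using Dual.finrank_ker_add_one_of_ne_zero hf
  have hinj : Function.Injective fun w : LinearMap.ker f => p + w :=
    (add_right_injective p).comp Subtype.val_injective
  let A := S.preimage ((↑) : LinearMap.ker f → _) Subtype.val_injective.injOn
  let B := S.preimage (fun w : LinearMap.ker f => p + w) hinj.injOn
  have hA (w : LinearMap.ker f) : w ∈ A ↔ ↑w ∈ S := mem_preimage
  have hB (w : LinearMap.ker f) : w ∈ B ↔ p + w ∈ S := mem_preimage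
  have hcardA : #A = #{s ∈ S | f s = 0} := by
    rw [card_preimage]
    simp
  have hcardB : #B = #{s ∈ S | ¬f s = 0} := by
    rw [card_preimage]
    refine congrArg card (filter_congr fun s _ => ⟨?_, ?_⟩)
    · rintro ⟨w, rfl⟩
      simp [hp]
    · exact (eq_zero_or_exists_ker_add_eq hp s).resolve_left
  rw [← card_filter_add_card_filter_not (s := S) (f · = 0), ← hcardA, ← hcardB]
  refine twenty_lt_card_add_card_of_finrank_eq_six hker (hcardA.trans_le hcard) ?_ ?_ ?_ ?_
  · simp only [hA, Submodule.coe_add]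
    exact fun a ha b hb => hS.1.add_notMem ha hb
  · simp only [hA, hB, Submodule.coe_add, ← add_assoc]
    exact fun b hb a ha => hS.1.add_notMem hb ha
  · simp only [hA, hB, or_iff_not_imp_left]
    exact fun w => hS.exists_ker_add_mem hp
  · simp only [hA, hB]
    exact fun w => hS.exists_add_ker_mem hp

theorem CompleteCap.twenty_lt_card {S : Finset (Fin 7 → ZMod 2)}
    (hS : CompleteCap (S : Set (Fin 7 → ZMod 2))) : 20 < #S := by
  by_contra! hle
  obtain ⟨u, hu, hcard⟩ := exists_ne_zero_card_filter_dotProduct_le_six hS.1 hle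
  exact hle.not_gt (hS.twenty_lt_card_of_card_filter_le_six
    (f := dotProductEquiv (ZMod 2) (Fin 7) u) (by simpa using hu) hcard)

end Hyperplane

theorem exists_completeCap_ncard_eq_card {n : ℕ} {C : Finset ℕ} (hlt : ∀ x ∈ C, x < 2 ^ n)
    (hfree : ∀ x ∈ C, ∀ y ∈ C, x ^^^ y ∉ C)
    (hcover : ∀ z < 2 ^ n, z ≠ 0 → z ∉ C → ∃ x ∈ C, x ^^^ z ∈ C) :
    ∃ S : Set (Fin n → ZMod 2), CompleteCap S ∧ S.ncard = #C := by
  let e := bitCode (Pi.basisFun (ZMod 2) (Fin n))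
  have hsurj {z : ℕ} (hz : z < 2 ^ n) : ∃ x, e x = z := exists_bitCode_eq _ hz
  have hne : ∀ s ∈ e ⁻¹' C, s ≠ 0 := by
    rintro s hs rfl
    refine hfree _ (mem_coe.1 hs) _ (mem_coe.1 hs) ?_
    rwa [← bitCode_add, add_zero]
  refine ⟨e ⁻¹' C, ⟨⟨hne, fun a ha b hb c hc _ _ _ habc => ?_⟩, hne, fun x hx hxC => ?_⟩, ?_⟩
  · refine hfree _ (mem_coe.1 ha) _ (mem_coe.1 hb) ?_
    rw [← bitCode_add, add_eq_zero_iff_eq_of_zmod_two.1 habc]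
    exact hc
  · obtain ⟨y, hy, hyx⟩ := hcover (e x) (bitCode_lt _ x) (mt (bitCode_eq_zero_iff _).1 hx) hxC
    obtain ⟨a, rfl⟩ := hsurj (hlt y hy)
    rw [← bitCode_add] at hyx
    refine ⟨a, hy, a + x, hyx, ?_, ?_⟩
    · simpa using hx
    · rw [← add_assoc, ZModModule.add_self, zero_add]
  · rw [Set.ncard_preimage_of_injective_subset_range (bitCode_injective _)
      fun z hz => hsurj (hlt z hz), Set.ncard_coe_finset]

/-- The codes of the points of a complete cap of size `21`. -/
def capCodes : Finset ℕ :=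
  {8, 11, 14, 19, 22, 23, 26, 39, 42, 53, 56, 66, 69, 71, 72, 87, 90, 103, 106, 117, 120}

theorem exists_completeCap_ncard_eq_twentyOne :
    ∃ S : Set (Fin 7 → ZMod 2), CompleteCap S ∧ S.ncard = 21 :=
  exists_completeCap_ncard_eq_card (C := capCodes) (by decide +kernel) (by decide +kernel)
    (by decide +kernel)

/-- The smallest complete cap in PG(6,2) has size 21: there is a complete 21-cap and
no complete cap of cardinality at most 20. -/
theorem completeCap_PG6_min_size :
    (∃ S : Set (Fin 7 → ZMod 2), CompleteCap S ∧ S.ncard = 21) ∧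
      ∀ S : Set (Fin 7 → ZMod 2), CompleteCap S → ¬ (S.ncard ≤ 20) := by
  refine ⟨exists_completeCap_ncard_eq_twentyOne, fun S hS hle => ?_⟩
  lift S to Finset (Fin 7 → ZMod 2) using S.toFinite
  rw [Set.ncard_coe_finset] at hle
  exact hle.not_gt hS.twenty_lt_card
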